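/- In the exact WKB setup, for any ε > 0, any sign κ ∈ {+1,−1} and any κ-transport pair (w_even, w_odd) on Ω, the associated exact WKB function v = (v₁,v₂), given by v₁ = e^{κz/ε}·H^{−1}·(w_even + w_odd) and v₂ = −κi·e^{κz/ε}·H·(w_even − w_odd), satisfies (ε/i)·v₁'(x) = g₊(x)·v₂(x) and (ε/i)·v₂'(x) = −g₋(x)·v₁(x) for all x ∈ Ω; that is, the exact WKB ansatz produces exact holomorphic solutions of the reduced Zakharov–Shabat system (ε/i)·v' = M·v with M = [[0, g₊],[−g₋, 0]]. -/

import Mathlib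

open Complex Filter Set

noncomputable section

/-- The exact WKB setup on an open set `Ω ⊆ ℂ` free of turning points:
`g₊, g₋, φ, H, z` are holomorphic on `Ω`, `φ` and `H` nowhere vanish on `Ω`,
`φ² = −g₊·g₋`, `g₊·H² = i·φ` and `z' = i·φ`. -/
structure WKBSetup (Ω : Set ℂ) (gp gm φ Hf zf : ℂ → ℂ) : Prop where
  open_Ω : IsOpen Ω
  diff_gp : DifferentiableOn ℂ gp Ω
  diff_gm : DifferentiableOn ℂ gm Ω
  diff_φ : DifferentiableOn ℂ φ Ω
  diff_H : DifferentiableOn ℂ Hf Ω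
  diff_z : DifferentiableOn ℂ zf Ω
  φ_ne : ∀ x ∈ Ω, φ x ≠ 0
  H_ne : ∀ x ∈ Ω, Hf x ≠ 0
  φ_sq : ∀ x ∈ Ω, φ x ^ 2 = -(gp x * gm x)
  H_sq : ∀ x ∈ Ω, gp x * Hf x ^ 2 = Complex.I * φ x
  z_deriv : ∀ x ∈ Ω, deriv zf x = Complex.I * φ x

/-- A `κ`-transport pair `(w_even, w_odd)` on `Ω`:
`w_even' = (H'/H)·w_odd` and `w_odd' + κ(2/ε)·z'·w_odd = (H'/H)·w_even`. -/
def TransportPair (Ω : Set ℂ) (Hf zf : ℂ → ℂ) (ε : ℝ) (κ : ℂ)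
    (we wo : ℂ → ℂ) : Prop :=
  DifferentiableOn ℂ we Ω ∧ DifferentiableOn ℂ wo Ω ∧
  (∀ x ∈ Ω, deriv we x = deriv Hf x / Hf x * wo x) ∧
  (∀ x ∈ Ω, deriv wo x + κ * (2 / (ε : ℂ)) * deriv zf x * wo x =
    deriv Hf x / Hf x * we x)

/-! Multiplying by a factor `G` with `G'/G = c - l`, where `l = H'/H` and `c = κz'/ε`, cancels the
diagonal part of the transport equations: `(G (w_even + w_odd))' = c G (w_even - w_odd)`. The system
is invariant under `(l, w_odd) ↦ (-l, -w_odd)`, so a factor with `G'/G = c + l` acts on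
`w_even - w_odd` in the same way. The factors `e^{κz/ε} H⁻¹` and `e^{κz/ε} H` have these logarithmic
derivatives, and `z' H⁻¹ = g₊ H`, `z' H = g₋ H⁻¹` turn the resulting equations into the
Zakharov–Shabat system. -/

section LogDeriv

variable {𝕜 : Type*} [NontriviallyNormedField 𝕜]

section CommRing

variable {𝔸 : Type*} [NormedCommRing 𝔸] [NormedAlgebra 𝕜 𝔸] {f g : 𝕜 → 𝔸} {a b : 𝔸} {x : 𝕜}

/-- `f` has logarithmic derivative `a` at `x`, used to track the amplitude factors of the WKB
ansatz. It is encoded without division, as `f' = a * f`, so `f x` need not be invertible. -/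
def HasLogDerivAt (f : 𝕜 → 𝔸) (a : 𝔸) (x : 𝕜) : Prop :=
  HasDerivAt f (a * f x) x

namespace HasLogDerivAt

theorem mul (hf : HasLogDerivAt f a x) (hg : HasLogDerivAt g b x) :
    HasLogDerivAt (fun y => f y * g y) (a + b) x :=
  (HasDerivAt.fun_mul hf hg).congr_deriv (by ring)

theorem const_mul (k : 𝔸) (hf : HasLogDerivAt f a x) :
    HasLogDerivAt (fun y => k * f y) a x :=
  (HasDerivAt.const_mul k hf).congr_deriv (by ring)

end HasLogDerivAt

variable {G u w : 𝕜 → 𝔸} {c l : 𝔸}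

theorem HasLogDerivAt.hasDerivAt_mul_add_of_transport (hG : HasLogDerivAt G (c - l) x)
    (hu : HasDerivAt u (l * w x) x) (hw : HasDerivAt w (l * u x - 2 * c * w x) x) :
    HasDerivAt (fun y => G y * (u y + w y)) (c * (G x * (u x - w x))) x :=
  (HasDerivAt.fun_mul hG (hu.fun_add hw)).congr_deriv (by ring)

theorem HasLogDerivAt.hasDerivAt_mul_sub_of_transport (hG : HasLogDerivAt G (c + l) x)
    (hu : HasDerivAt u (l * w x) x) (hw : HasDerivAt w (l * u x - 2 * c * w x) x) :
    HasDerivAt (fun y => G y * (u y - w y)) (c * (G x * (u x + w x))) x := by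
  have hG' : HasLogDerivAt G (c - -l) x := by rwa [sub_neg_eq_add]
  have hu' : HasDerivAt u (-l * -w x) x := by rwa [neg_mul_neg]
  have hw' : HasDerivAt (fun y => -w y) (-l * u x - 2 * c * -w x) x :=
    hw.fun_neg.congr_deriv (by ring)
  simpa only [← sub_eq_add_neg, sub_neg_eq_add] using
    hG'.hasDerivAt_mul_add_of_transport hu' hw'

end CommRing

section Field

variable {𝕜' : Type*} [NontriviallyNormedField 𝕜'] [NormedAlgebra 𝕜 𝕜']
  {f : 𝕜 → 𝕜'} {a : 𝕜'} {x : 𝕜}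

theorem HasLogDerivAt.inv (hf : HasLogDerivAt f a x) (hx : f x ≠ 0) :
    HasLogDerivAt (fun y => (f y)⁻¹) (-a) x :=
  (HasDerivAt.fun_inv (c := f) hf hx).congr_deriv (by field_simp)

theorem hasLogDerivAt_deriv_div (hf : DifferentiableAt 𝕜 f x) (hx : f x ≠ 0) :
    HasLogDerivAt f (deriv f x / f x) x :=
  hf.hasDerivAt.congr_deriv (div_mul_cancel₀ _ hx).symm

end Field

end LogDeriv

theorem hasLogDerivAt_cexp {θ : ℂ → ℂ} {c x : ℂ} (hθ : HasDerivAt θ c x) :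
    HasLogDerivAt (fun y => Complex.exp (θ y)) c x :=
  hθ.cexp.congr_deriv (mul_comm _ _)

namespace WKBSetup

variable {Ω : Set ℂ} {gp gm φ Hf zf : ℂ → ℂ} {x : ℂ}

theorem gp_ne_zero (h : WKBSetup Ω gp gm φ Hf zf) (hx : x ∈ Ω) : gp x ≠ 0 := by
  intro hgp
  have hφ : φ x ^ 2 = 0 := by rw [h.φ_sq x hx, hgp, zero_mul, neg_zero]
  exact h.φ_ne x hx (sq_eq_zero_iff.mp hφ)

theorem deriv_z_eq_gp_mul_H_sq (h : WKBSetup Ω gp gm φ Hf zf) (hx : x ∈ Ω) :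
    deriv zf x = gp x * Hf x ^ 2 := by
  rw [h.z_deriv x hx, h.H_sq x hx]

theorem deriv_z_sq (h : WKBSetup Ω gp gm φ Hf zf) (hx : x ∈ Ω) :
    deriv zf x ^ 2 = gp x * gm x := by
  rw [h.z_deriv x hx, mul_pow, Complex.I_sq, h.φ_sq x hx, neg_one_mul, neg_neg]

theorem deriv_z_mul_inv_H (h : WKBSetup Ω gp gm φ Hf zf) (hx : x ∈ Ω) :
    deriv zf x * (Hf x)⁻¹ = gp x * Hf x := by
  have hH := h.H_ne x hx
  rw [h.deriv_z_eq_gp_mul_H_sq hx]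
  field_simp

theorem deriv_z_mul_H (h : WKBSetup Ω gp gm φ Hf zf) (hx : x ∈ Ω) :
    deriv zf x * Hf x = gm x * (Hf x)⁻¹ := by
  have hgm : deriv zf x * Hf x ^ 2 = gm x := by
    apply mul_left_cancel₀ (h.gp_ne_zero hx)
    calc gp x * (deriv zf x * Hf x ^ 2) = deriv zf x * (gp x * Hf x ^ 2) := by ring
      _ = deriv zf x ^ 2 := by rw [← h.deriv_z_eq_gp_mul_H_sq hx, sq]
      _ = gp x * gm x := h.deriv_z_sq hx
  rw [eq_mul_inv_iff_mul_eq₀ (h.H_ne x hx), mul_assoc, ← sq, hgm]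

end WKBSetup

namespace TransportPair

variable {Ω : Set ℂ} {Hf zf we wo : ℂ → ℂ} {ε : ℝ} {κ x : ℂ}

theorem hasDerivAt_even (h : TransportPair Ω Hf zf ε κ we wo) (hx : Ω ∈ nhds x) :
    HasDerivAt we (deriv Hf x / Hf x * wo x) x :=
  h.1.hasDerivAt hx |>.congr_deriv (h.2.2.1 x (mem_of_mem_nhds hx))

theorem hasDerivAt_odd (h : TransportPair Ω Hf zf ε κ we wo) (hx : Ω ∈ nhds x) :
    HasDerivAt wo (deriv Hf x / Hf x * we x - 2 * (κ * deriv zf x / ε) * wo x) x :=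
  h.2.1.hasDerivAt hx |>.congr_deriv <| by
    linear_combination h.2.2.2 x (mem_of_mem_nhds hx)

end TransportPair

/-- The exact WKB ansatz produces exact holomorphic solutions of the reduced
Zakharov–Shabat system: with `v₁ = e^{κz/ε}·H⁻¹·(w_even + w_odd)` and
`v₂ = −κi·e^{κz/ε}·H·(w_even − w_odd)`, one has `(ε/i)·v₁' = g₊·v₂` and
`(ε/i)·v₂' = −g₋·v₁` on `Ω`. -/
theorem exact_wkb_solves_reduced_ZS
    (Ω : Set ℂ) (gp gm φ Hf zf : ℂ → ℂ) (hsetup : WKBSetup Ω gp gm φ Hf zf)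
    (ε : ℝ) (hε : 0 < ε) (κ : ℂ) (hκ : κ = 1 ∨ κ = -1)
    (we wo : ℂ → ℂ) (hw : TransportPair Ω Hf zf ε κ we wo) :
    ∀ x ∈ Ω,
      HasDerivAt (fun y => Complex.exp (κ * zf y / ε) * (Hf y)⁻¹ * (we y + wo y))
        (Complex.I / (ε : ℂ) * (gp x *
          (-κ * Complex.I * Complex.exp (κ * zf x / ε) * Hf x * (we x - wo x)))) x ∧
      HasDerivAt (fun y => -κ * Complex.I * Complex.exp (κ * zf y / ε) * Hf y * (we y - wo y))
        (-(Complex.I / (ε : ℂ)) * (gm x *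
          (Complex.exp (κ * zf x / ε) * (Hf x)⁻¹ * (we x + wo x)))) x := by
  intro x hx
  have hΩ := hsetup.open_Ω.mem_nhds hx
  have hwe := hw.hasDerivAt_even hΩ
  have hwo := hw.hasDerivAt_odd hΩ
  have hH := hasLogDerivAt_deriv_div (hsetup.diff_H.differentiableAt hΩ) (hsetup.H_ne x hx)
  have hexp : HasLogDerivAt (fun y => Complex.exp (κ * zf y / ε)) (κ * deriv zf x / ε) x :=
    hasLogDerivAt_cexp (((hsetup.diff_z.hasDerivAt hΩ).const_mul κ).div_const (ε : ℂ))
  have hκ_sq : κ ^ 2 = 1 := sq_eq_one_iff.mpr hκ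
  constructor
  · have hG := hexp.mul (hH.inv (hsetup.H_ne x hx))
    rw [← sub_eq_add_neg] at hG
    refine (hG.hasDerivAt_mul_add_of_transport hwe hwo).congr_deriv ?_
    linear_combination
      κ / ε * Complex.exp (κ * zf x / ε) * (we x - wo x) * hsetup.deriv_z_mul_inv_H hx +
      κ / ε * gp x * Complex.exp (κ * zf x / ε) * Hf x * (we x - wo x) * Complex.I_sq
  · have hG := (hexp.const_mul (-κ * Complex.I)).mul hH
    refine (hG.hasDerivAt_mul_sub_of_transport hwe hwo).congr_deriv ?_
    linear_combination
      -κ ^ 2 * Complex.I / ε * Complex.exp (κ * zf x / ε) * (we x + wo x) *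
        hsetup.deriv_z_mul_H hx -
      Complex.I / ε * gm x * Complex.exp (κ * zf x / ε) * (Hf x)⁻¹ * (we x + wo x) * hκ_sq

end
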